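/- The merit function θ : ℝⁿ × ℝ^q → ℝ defined by θ(z,v) = ½‖F(z,v)‖² = ½‖Hz + f + Aᵀv‖² + ½ Σ_{i=1}^q φ(v_i, y_i(z))² is continuously differentiable on all of ℝⁿ × ℝ^q, even though F itself is not everywhere differentiable. -/

import Mathlib

/-!
Writing `w = (a, b)` and `ℓ w = a + b`, we have `φ(a, b) = ℓ w - ‖w‖` for the Euclidean norm, so
`φ(a, b)² = (ℓ w)² + ‖w‖² - 2 ‖w‖ ℓ w`, and only the product `‖w‖ ℓ w` is in question. A product
`g • f` with `f` of class `C¹` and `g` Lipschitz is `C¹` as soon as `g` is `C¹` near the points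
where `f` does not vanish: at a zero of `f` its derivative is `g • f'`, and the other term `g' f` of
the product rule is continuous there because `g'` is bounded. Here `g = ‖·‖` is singular only at the
origin, where `ℓ` vanishes.
-/

open Matrix

/-- The (non-smooth) Fischer–Burmeister function `φ(a,b) = a + b - √(a² + b²)`. -/
noncomputable def phiFB (a b : ℝ) : ℝ := a + b - Real.sqrt (a ^ 2 + b ^ 2)

/-- The merit function
`θ(z,v) = ½‖F(z,v)‖² = ½‖Hz + f + Aᵀv‖² + ½ Σᵢ φ(vᵢ, (b − Az)ᵢ)²` (Euclidean norm). -/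
noncomputable def meritFB (n q : ℕ) (H : Matrix (Fin n) (Fin n) ℝ)
    (A : Matrix (Fin q) (Fin n) ℝ) (f : Fin n → ℝ) (b : Fin q → ℝ)
    (x : (Fin n → ℝ) × (Fin q → ℝ)) : ℝ :=
  (1 / 2) * ∑ j, ((H.mulVec x.1 + f + Aᵀ.mulVec x.2) j) ^ 2 +
    (1 / 2) * ∑ i, (phiFB (x.2 i) ((b - A.mulVec x.1) i)) ^ 2

open Asymptotics Filter Topology
open scoped NNReal

section LipschitzFactor

variable {𝕜 E F : Type*} [NontriviallyNormedField 𝕜] [NormedAddCommGroup E] [NormedSpace 𝕜 E]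
  [NormedAddCommGroup F] [NormedSpace 𝕜 F] {g : E → 𝕜} {f : E → F}

theorem hasFDerivAt_smul_of_eq_zero {f' : E →L[𝕜] F} {x : E} (hg : ContinuousAt g x)
    (hf : HasFDerivAt f f' x) (hfx : f x = 0) :
    HasFDerivAt (fun y => g y • f y) (g x • f') x := by
  have hf_bigO : f =O[𝓝 x] (· - x) := by simpa [hfx] using hf.isBigO_sub
  have hg_littleO : (fun y => g y - g x) =o[𝓝 x] fun _ => (1 : 𝕜) :=
    (isLittleO_one_iff 𝕜).2 (tendsto_sub_nhds_zero_iff.2 hg)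
  have hremainder : HasFDerivAt (fun y => (g y - g x) • f y) (0 : E →L[𝕜] F) x :=
    .of_isLittleO <| by simpa [hfx] using hg_littleO.smul_isBigO hf_bigO
  simpa [sub_smul] using (hf.fun_const_smul (g x)).fun_add hremainder

theorem continuousAt_fderiv_smulRight_of_eq_zero {K : ℝ≥0} {x : E} (hg : LipschitzWith K g)
    (hf : ContinuousAt f x) (hfx : f x = 0) :
    ContinuousAt (fun y => (fderiv 𝕜 g y).smulRight (f y)) x := by
  have hbound (y : E) : ‖(fderiv 𝕜 g y).smulRight (f y)‖ ≤ K * ‖f y‖ := by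
    rw [ContinuousLinearMap.norm_smulRight_apply]
    gcongr
    exact norm_fderiv_le_of_lipschitz 𝕜 hg
  have hlim : Tendsto (fun y => K * ‖f y‖) (𝓝 x) (𝓝 0) := by
    simpa [ContinuousAt, hfx] using hf.norm.const_mul (K : ℝ)
  simpa [ContinuousAt, hfx] using squeeze_zero_norm hbound hlim

theorem contDiff_smul_of_lipschitzWith {K : ℝ≥0} (hf : ContDiff 𝕜 1 f)
    (hg : LipschitzWith K g) (hgf : ∀ x, f x ≠ 0 → ContDiffAt 𝕜 1 g x) :
    ContDiff 𝕜 1 fun x => g x • f x := by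
  -- Where `f x = 0`, `fderiv 𝕜 g x` may be a junk value, but then the second term vanishes.
  refine contDiff_one_iff_hasFDerivAt.2
    ⟨fun x => g x • fderiv 𝕜 f x + (fderiv 𝕜 g x).smulRight (f x), ?_, fun x => ?_⟩
  · refine (hg.continuous.smul (hf.continuous_fderiv one_ne_zero)).add
      (continuous_iff_continuousAt.2 fun x => ?_)
    by_cases hfx : f x = 0
    · exact continuousAt_fderiv_smulRight_of_eq_zero hg hf.continuous.continuousAt hfx
    · exact isBoundedBilinearMap_smulRight.continuous.continuousAt.comp
        (((hgf x hfx).continuousAt_fderiv one_ne_zero).prodMk hf.continuous.continuousAt)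
  · have hf' : HasFDerivAt f (fderiv 𝕜 f x) x := (hf.differentiable one_ne_zero x).hasFDerivAt
    by_cases hfx : f x = 0
    · simpa [hfx] using hasFDerivAt_smul_of_eq_zero hg.continuous.continuousAt hf' hfx
    · exact ((hgf x hfx).differentiableAt one_ne_zero).hasFDerivAt.smul hf'

end LipschitzFactor

section Norm

variable {E F : Type*} [NormedAddCommGroup E] [InnerProductSpace ℝ E]
  [NormedAddCommGroup F] [NormedSpace ℝ F]

theorem contDiff_norm_smul {f : E → F} (hf : ContDiff ℝ 1 f) (hf₀ : f 0 = 0) :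
    ContDiff ℝ 1 fun x => ‖x‖ • f x :=
  contDiff_smul_of_lipschitzWith hf lipschitzWith_one_norm fun _ hfx =>
    contDiffAt_norm ℝ (ne_of_apply_ne f (hf₀ ▸ hfx))

theorem contDiff_sq_sub_norm {f : E → ℝ} (hf : ContDiff ℝ 1 f) (hf₀ : f 0 = 0) :
    ContDiff ℝ 1 fun x => (f x - ‖x‖) ^ 2 := by
  have hexpand (x : E) : (f x - ‖x‖) ^ 2 = f x ^ 2 + ‖x‖ ^ 2 - 2 * (‖x‖ • f x) := by
    rw [smul_eq_mul]
    ring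
  simp_rw [hexpand]
  exact ((hf.pow 2).add (contDiff_norm_sq ℝ)).sub
    (contDiff_const.mul (contDiff_norm_smul hf hf₀))

end Norm

theorem phiFB_eq_add_sub_norm (a b : ℝ) : phiFB a b = a + b - ‖WithLp.toLp 2 (a, b)‖ := by
  simp [phiFB, WithLp.prod_norm_eq_of_L2]

theorem contDiff_phiFB_sq : ContDiff ℝ 1 fun p : ℝ × ℝ => phiFB p.1 p.2 ^ 2 := by
  have hsum : ContDiff ℝ 1 fun w : WithLp 2 (ℝ × ℝ) => w.fst + w.snd :=
    (contDiff_fst.add contDiff_snd).comp WithLp.contDiff_ofLp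
  have hsq := contDiff_sq_sub_norm hsum (by simp)
  simp_rw [phiFB_eq_add_sub_norm]
  exact hsq.comp WithLp.contDiff_toLp

theorem contDiff_mulVec {𝕜 m n : Type*} [NontriviallyNormedField 𝕜] [Fintype m] [Fintype n]
    {k : WithTop ℕ∞} (M : Matrix m n 𝕜) : ContDiff 𝕜 k M.mulVec :=
  contDiff_pi.2 fun _ => ContDiff.sum fun j _ => contDiff_const.mul (contDiff_apply 𝕜 𝕜 j)

theorem statement_15_general (n q : ℕ) (H : Matrix (Fin n) (Fin n) ℝ)
    (A : Matrix (Fin q) (Fin n) ℝ) (f : Fin n → ℝ) (b : Fin q → ℝ) :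
    ContDiff ℝ 1 (meritFB n q H A f b) := by
  have hstationarity : ContDiff ℝ 1 fun x : (Fin n → ℝ) × (Fin q → ℝ) =>
      H.mulVec x.1 + f + Aᵀ.mulVec x.2 :=
    (((contDiff_mulVec H).comp contDiff_fst).add contDiff_const).add
      ((contDiff_mulVec Aᵀ).comp contDiff_snd)
  have hslack : ContDiff ℝ 1 fun x : (Fin n → ℝ) × (Fin q → ℝ) => b - A.mulVec x.1 :=
    contDiff_const.sub ((contDiff_mulVec A).comp contDiff_fst)
  have hcomplementarity (i : Fin q) : ContDiff ℝ 1 fun x : (Fin n → ℝ) × (Fin q → ℝ) =>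
      phiFB (x.2 i) ((b - A.mulVec x.1) i) ^ 2 :=
    contDiff_phiFB_sq.comp
      (((contDiff_apply ℝ ℝ i).comp contDiff_snd).prodMk (contDiff_pi.1 hslack i))
  exact (contDiff_const.mul (.sum fun j _ => (contDiff_pi.1 hstationarity j).pow 2)).add
    (contDiff_const.mul (.sum fun i _ => hcomplementarity i))

/-- the merit function `θ(z,v) = ½‖F(z,v)‖²` is continuously
differentiable on all of `ℝⁿ × ℝ^q` (even though `F` itself is not everywhere
differentiable). -/
theorem statement_15 (n q : ℕ) (H : Matrix (Fin n) (Fin n) ℝ) (hH : H.PosSemidef)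
    (A : Matrix (Fin q) (Fin n) ℝ) (f : Fin n → ℝ) (b : Fin q → ℝ) :
    ContDiff ℝ 1 (meritFB n q H A f b) :=
  statement_15_general n q H A f b
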